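/- With the apparatus fixed, suppose that a and b are integers with 0 ≤ a < b ≤ (2θ)^{−1} and that Λ ≥ 0. Then there exists a constant C depending at most on s, k, r, t, N such that ⟦K_{a,b}(X)⟧ ≤ C·X^{Λ+δ}·(M^{b−a})^s. -/

import Mathlib

open Filter MeasureTheory Finset

attribute [local instance] Classical.propDecidable

noncomputable section

/-- Number of integral solutions of the Vinogradov system of degree k
in 2s variables from [1,X]. -/
def Jcount (s k : ℕ) (X : ℝ) : ℕ :=
  Set.ncard {xy : (Fin s → ℤ) × (Fin s → ℤ) |
    (∀ i, 1 ≤ xy.1 i ∧ (xy.1 i : ℝ) ≤ X) ∧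
    (∀ i, 1 ≤ xy.2 i ∧ (xy.2 i : ℝ) ≤ X) ∧
    ∀ j ∈ Finset.Icc 1 k, ∑ i, ((xy.1 i) ^ j - (xy.2 i) ^ j) = 0}

/-- e(z) = exp(2πiz). -/
def ec (z : ℝ) : ℂ := Complex.exp (2 * Real.pi * Complex.I * z)

/-- The unit box [0,1)^k. -/
def box (k : ℕ) : Set (Fin k → ℝ) := Set.univ.pi fun _ => Set.Ico (0:ℝ) 1

/-- The exponential sum f_c(α;ξ), over 1 ≤ x ≤ X with x ≡ ξ (mod p^c). -/
def fexp (k p : ℕ) (X : ℝ) (c : ℕ) (ξ : ℤ) (α : Fin k → ℝ) : ℂ :=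
  ∑ x ∈ (Finset.Icc (1:ℤ) ⌊X⌋).filter (fun x => Int.ModEq ((p:ℤ)^c) x ξ),
    ec (∑ j : Fin k, α j * (x:ℝ)^((j:ℕ)+1))

/-- The set Ξ_c^r(ξ): r-tuples in [1,p^{c+1}], congruent to ξ mod p^c,
pairwise distinct mod p^{c+1}. -/
def XiSet (p r c : ℕ) (ξ : ℤ) : Set (Fin r → ℤ) :=
  {v | (∀ i, 1 ≤ v i ∧ v i ≤ (p:ℤ)^(c+1)) ∧
       (∀ i, Int.ModEq ((p:ℤ)^c) (v i) ξ) ∧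
       Function.Injective fun i => ((v i : ZMod (p^(c+1))))}

/-- The conditioned exponential sum F_c(α;ξ). -/
def Fexp (k p r : ℕ) (X : ℝ) (c : ℕ) (ξ : ℤ) (α : Fin k → ℝ) : ℂ :=
  ∑ᶠ v ∈ XiSet p r c ξ, ∏ i, fexp k p X (c+1) (v i) α

/-- The mean value I_{a,b}(X;ξ,η). -/
def Iab (k p r s : ℕ) (X : ℝ) (a b : ℕ) (ξ η : ℤ) : ℝ :=
  ∫ α in box k, ‖Fexp k p r X a ξ α‖^2 * ‖fexp k p X b η α‖^(2*s)

/-- The mean value K_{a,b}(X;ξ,η). -/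
def Kab (k p r t : ℕ) (X : ℝ) (a b : ℕ) (ξ η : ℤ) : ℝ :=
  ∫ α in box k, ‖Fexp k p r X a ξ α‖^2 * ‖Fexp k p r X b η α‖^(2*t)

/-- I_{a,b}(X): the maximum of I_{a,b}(X;ξ,η) over admissible ξ, η. -/
def Imax (k p r s : ℕ) (X : ℝ) (a b : ℕ) : ℝ :=
  sSup {v : ℝ | ∃ ξ η : ℤ, 1 ≤ ξ ∧ ξ ≤ (p:ℤ)^a ∧ 1 ≤ η ∧ η ≤ (p:ℤ)^b ∧
    ¬ Int.ModEq (p:ℤ) η ξ ∧ v = Iab k p r s X a b ξ η}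

/-- The set Ξ(η) of members of Ξ_0^r(0) avoiding the class of η mod p. -/
def XiTilde (p r : ℕ) (η : ℤ) : Set (Fin r → ℤ) :=
  {v | v ∈ XiSet p r 0 0 ∧ ∀ i, ¬ Int.ModEq (p:ℤ) (v i) η}

/-- The pre-conditioned sum F(α;η). -/
def Ftilde (k p r : ℕ) (X : ℝ) (η : ℤ) (α : Fin k → ℝ) : ℂ :=
  ∑ᶠ v ∈ XiTilde p r η, ∏ i, fexp k p X 1 (v i) α

/-- The mean value K̃_c(X;η). -/
def Ktilde (k p r t : ℕ) (X : ℝ) (c : ℕ) (η : ℤ) : ℝ :=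
  ∫ α in box k, ‖Ftilde k p r X η α‖^2 * ‖Fexp k p r X c η α‖^(2*t)

/-- K_{a,b}(X): for a ≥ 1 the maximum of K_{a,b}(X;ξ,η) over admissible ξ, η;
for a = 0 the pre-congruencing quantity K_{0,b}(X) = max_η K̃_b(X;η). -/
def Kmax (k p r t : ℕ) (X : ℝ) (a b : ℕ) : ℝ :=
  if a = 0 then sSup {v : ℝ | ∃ η : ℤ, 1 ≤ η ∧ η ≤ (p:ℤ)^b ∧ v = Ktilde k p r t X b η}
  else sSup {v : ℝ | ∃ ξ η : ℤ, 1 ≤ ξ ∧ ξ ≤ (p:ℤ)^a ∧ 1 ≤ η ∧ η ≤ (p:ℤ)^b ∧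
    ¬ Int.ModEq (p:ℤ) η ξ ∧ v = Kab k p r t X a b ξ η}

/-- λ = limsup_{Y→∞} log J_{sr,k}(Y)/log Y. -/
def lamExp (k sr : ℕ) : ℝ :=
  Filter.limsup (fun Y : ℝ => Real.log ((Jcount sr k Y : ℝ)) / Real.log Y) Filter.atTop

/-- θ = (16t)^{-N-1}. -/
def thetaC (t N : ℕ) : ℝ := (16*(t:ℝ)) ^ (-((N:ℝ)+1))

/-- δ = θ/(1000 N t^N). -/
def deltaC (t N : ℕ) : ℝ := thetaC t N / (1000 * (N:ℝ) * (t:ℝ)^N)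

/-- M = X^θ. -/
def Mval (t N : ℕ) (X : ℝ) : ℝ := X ^ thetaC t N

/-- κ = r(t+1) - (1/2)(t+r-k)(t+r-k-1+(2r-2)/(t-1)). -/
def kappa (k r t : ℕ) : ℝ :=
  (r : ℝ) * ((t : ℝ) + 1) -
    (1/2) * ((t : ℝ) + r - k) * ((t : ℝ) + r - k - 1 + (2*(r:ℝ) - 2)/((t:ℝ) - 1))

/-- Λ = λ - 2(s+r) + κ, with s = rt. -/
def LamC (k r t : ℕ) : ℝ := lamExp k (r*(t+1)) - 2*((r*(t+1) : ℕ) : ℝ) + kappa k r t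

/-- The normalised mean value ⟦K_{a,b}(X)⟧ = K_{a,b}(X) (X/M^b)^{-2s} (X/M^a)^{κ-2r}. -/
def normK (k p r t N : ℕ) (X : ℝ) (a b : ℕ) : ℝ :=
  Kmax k p r t X a b * (X / (Mval t N X)^b) ^ (-(2*((r*t : ℕ):ℝ))) *
    (X / (Mval t N X)^a) ^ (kappa k r t - 2*(r:ℝ))

/-- μ = (1/2)(t+r-k)(t+r-k-1). -/
def muC (k r t : ℕ) : ℝ := (1/2) * ((t:ℝ)+r-k) * ((t:ℝ)+r-k-1)

/-- ν = (1/2)(t+r-k)(k+r-t-1). -/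
def nuC (k r t : ℕ) : ℝ := (1/2) * ((t:ℝ)+r-k) * ((k:ℝ)+r-t-1)


/-- The character `α ↦ e(α · m)` of the torus attached to an integer vector `m`. -/
def echar {k : ℕ} (m : Fin k → ℤ) (α : Fin k → ℝ) : ℂ :=
  ec (∑ j, α j * (m j : ℝ))

/-- The vector of power sums of degrees `1, …, k` of a tuple of integers. -/
def powerSums (k : ℕ) {ι : Type*} [Fintype ι] (x : ι → ℤ) : Fin k → ℤ :=
  fun j => ∑ i, x i ^ ((j : ℕ) + 1)

lemma ec_sum {ι : Type*} (s : Finset ι) (f : ι → ℝ) :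
    ec (∑ i ∈ s, f i) = ∏ i ∈ s, ec (f i) := by
  simp only [ec, Complex.ofReal_sum, Finset.mul_sum, Complex.exp_sum]

lemma continuous_echar {k : ℕ} (m : Fin k → ℤ) : Continuous (echar m) := by
  unfold echar ec
  fun_prop

lemma echar_mul_conj {k : ℕ} (m n : Fin k → ℤ) (α : Fin k → ℝ) :
    echar m α * (starRingEnd ℂ) (echar n α) = echar (m - n) α := by
  simp only [echar, ec, ← Complex.exp_conj, ← Complex.exp_add]
  congr 1
  simp only [map_mul, Complex.conj_ofReal, Complex.conj_I, map_ofNat, Pi.sub_apply, Int.cast_sub,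
    mul_sub, Finset.sum_sub_distrib, Complex.ofReal_sub]
  ring

lemma echar_sum {k : ℕ} {ι : Type*} (s : Finset ι) (m : ι → Fin k → ℤ) (α : Fin k → ℝ) :
    echar (∑ i ∈ s, m i) α = ∏ i ∈ s, echar (m i) α := by
  simp only [echar, ← ec_sum]
  congr 1
  rw [Finset.sum_comm]
  refine Finset.sum_congr rfl fun j _ => ?_
  simp [Finset.sum_apply, Finset.mul_sum]

lemma integral_ec_mul_int (m : ℤ) :
    ∫ x in Set.Ico (0:ℝ) 1, ec (x * (m : ℝ)) = if m = 0 then 1 else 0 := by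
  rw [integral_Ico_eq_integral_Ioc, ← intervalIntegral.integral_of_le zero_le_one]
  split_ifs with hm
  · simp [hm, ec]
  · have hc : (2 * Real.pi * Complex.I * m : ℂ) ≠ 0 := by
      have := Real.pi_ne_zero
      simp [hm, this]
    have h := integral_exp_mul_complex (a := 0) (b := 1) hc
    have he : Complex.exp (2 * Real.pi * Complex.I * m) = 1 := by
      rw [Complex.exp_eq_one_iff]
      exact ⟨m, by ring⟩
    simp only [Complex.ofReal_one, mul_one, Complex.ofReal_zero, mul_zero, Complex.exp_zero, he,
      sub_self, zero_div] at h
    rw [← h]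
    refine intervalIntegral.integral_congr fun x _ => ?_
    simp only [ec]
    congr 1
    push_cast
    ring

lemma integral_box_echar {k : ℕ} (m : Fin k → ℤ) :
    ∫ α in box k, echar m α = if m = 0 then 1 else 0 := by
  have hprod : ∀ α : Fin k → ℝ, echar m α = ∏ j, ec (α j * (m j : ℝ)) := fun α => by
    rw [echar, ec_sum]
  simp only [hprod]
  rw [_root_.box, volume_pi, Measure.restrict_pi_pi,
    integral_fintype_prod_eq_prod (fun j (x : ℝ) => ec (x * (m j : ℝ)))]
  simp only [integral_ec_mul_int]
  rw [Finset.prod_ite_zero]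
  simp [funext_iff]

lemma Continuous.integrableOn_box {k : ℕ} {E : Type*} [NormedAddCommGroup E]
    {f : (Fin k → ℝ) → E} (hf : Continuous f) : IntegrableOn f (box k) := by
  have hK : IsCompact (Set.univ.pi fun _ : Fin k => Set.Icc (0:ℝ) 1) :=
    isCompact_univ_pi fun _ => isCompact_Icc
  exact (hf.continuousOn.integrableOn_compact hK).mono_set
    (Set.pi_mono fun _ _ => Set.Ico_subset_Icc_self)

/-- Orthogonality: the mean square of an exponential sum counts coincidences of frequencies. -/
lemma integral_box_norm_sq {k : ℕ} {ι : Type*} (A : Finset ι) (φ : ι → Fin k → ℤ) :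
    ∫ α in box k, ‖∑ x ∈ A, echar (φ x) α‖ ^ 2 =
      (#{z ∈ A ×ˢ A | φ z.1 = φ z.2} : ℝ) := by
  have hC : ((∫ α in box k, ‖∑ x ∈ A, echar (φ x) α‖ ^ 2 : ℝ) : ℂ) =
      (#{z ∈ A ×ˢ A | φ z.1 = φ z.2} : ℂ) := by
    rw [← integral_complex_ofReal]
    have hpt : ∀ α : Fin k → ℝ, ((‖∑ x ∈ A, echar (φ x) α‖ ^ 2 : ℝ) : ℂ) =
        ∑ z ∈ A ×ˢ A, echar (φ z.1 - φ z.2) α := fun α => by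
      rw [Complex.ofReal_pow, ← Complex.mul_conj', map_sum, Finset.sum_mul_sum,
        ← Finset.sum_product']
      exact Finset.sum_congr rfl fun z _ => echar_mul_conj _ _ _
    simp only [hpt]
    rw [integral_finsetSum _ fun z _ => (continuous_echar _).integrableOn_box]
    simp [integral_box_echar, sub_eq_zero]
  exact_mod_cast hC

/-- Vanishing of differences of power sums is invariant under translation. -/
lemma sum_sub_pow_add_eq_zero {ι : Type*} [Fintype ι] {k : ℕ} {x y : ι → ℤ}
    (h : ∀ j ≤ k, ∑ i, (x i ^ j - y i ^ j) = 0) (c : ℤ) {j : ℕ} (hj : j ≤ k) :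
    ∑ i, ((x i + c) ^ j - (y i + c) ^ j) = 0 := by
  simp only [add_pow, ← Finset.sum_sub_distrib, ← sub_mul]
  rw [Finset.sum_comm]
  refine Finset.sum_eq_zero fun l hl => ?_
  rw [← Finset.sum_mul, ← Finset.sum_mul, h l (by simp at hl; omega)]
  simp

lemma powerSums_eq_iff {ι : Type*} [Fintype ι] {k : ℕ} {x y : ι → ℤ} :
    powerSums k x = powerSums k y ↔ ∀ j ≤ k, ∑ i, (x i ^ j - y i ^ j) = 0 := by
  constructor
  · rintro h (_ | j) hj
    · simp
    · have := congrFun h ⟨j, hj⟩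
      simp only [powerSums] at this
      rw [Finset.sum_sub_distrib, this, sub_self]
  · intro h
    funext j
    have := h (j + 1) j.2
    rw [Finset.sum_sub_distrib] at this
    exact sub_eq_zero.mp this

/-- Translation-dilation invariance of the Vinogradov system. -/
lemma powerSums_eq_of_affine {ι : Type*} [Fintype ι] {k : ℕ} {x y : ι → ℤ} {q c : ℤ} (hq : q ≠ 0)
    (h : powerSums k (fun i => q * x i + c) = powerSums k (fun i => q * y i + c)) :
    powerSums k x = powerSums k y := by
  rw [powerSums_eq_iff] at h ⊢
  intro j hj
  have := sum_sub_pow_add_eq_zero h (-c) hj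
  simp only [add_neg_cancel_right, mul_pow, ← mul_sub, ← Finset.mul_sum] at this
  exact (mul_eq_zero.mp this).resolve_left (pow_ne_zero _ hq)

lemma finite_Jcount_set (s k : ℕ) (X : ℝ) :
    {xy : (Fin s → ℤ) × (Fin s → ℤ) |
      (∀ i, 1 ≤ xy.1 i ∧ (xy.1 i : ℝ) ≤ X) ∧
      (∀ i, 1 ≤ xy.2 i ∧ (xy.2 i : ℝ) ≤ X) ∧
      ∀ j ∈ Finset.Icc 1 k, ∑ i, ((xy.1 i) ^ j - (xy.2 i) ^ j) = 0}.Finite := by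
  have hfin : (Set.univ.pi fun _ : Fin s => Set.Icc (1:ℤ) ⌊X⌋).Finite :=
    Set.Finite.pi fun _ => Set.finite_Icc _ _
  refine (hfin.prod hfin).subset fun z hz => ⟨fun i _ => ?_, fun i _ => ?_⟩
  · exact ⟨(hz.1 i).1, Int.le_floor.2 (hz.1 i).2⟩
  · exact ⟨(hz.2.1 i).1, Int.le_floor.2 (hz.2.1 i).2⟩

/-- The integers in `[1, X]` congruent to `ξ` modulo `q`. -/
def progression (X : ℝ) (q ξ : ℤ) : Finset ℤ :=
  (Finset.Icc (1:ℤ) ⌊X⌋).filter fun x => Int.ModEq q x ξ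

lemma mem_progression {X : ℝ} {q ξ x : ℤ} :
    x ∈ progression X q ξ ↔ (1 ≤ x ∧ (x : ℝ) ≤ X) ∧ x ≡ ξ [ZMOD q] := by
  simp [progression, Int.le_floor]

lemma fexp_eq_sum_echar (k p : ℕ) (X : ℝ) (c : ℕ) (ξ : ℤ) (α : Fin k → ℝ) :
    fexp k p X c ξ α =
      ∑ x ∈ progression X ((p:ℤ) ^ c) ξ, echar (fun j : Fin k => x ^ ((j : ℕ) + 1)) α := by
  simp [fexp, progression, echar]

/-- A sum of products of progressions' exponential sums is one exponential sum over tuples. -/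
lemma exists_finsum_prod_fexp_eq (k p r : ℕ) (X : ℝ) (c : ℕ) (ξ : ℤ)
    (V : Set (Fin r → ℤ))
    (hV : ∀ v ∈ V, ∀ i, (1 ≤ v i ∧ v i ≤ (p:ℤ) ^ (c+1)) ∧ v i ≡ ξ [ZMOD (p:ℤ) ^ c]) :
    ∃ A ⊆ Fintype.piFinset fun _ : Fin r => progression X ((p:ℤ) ^ c) ξ, ∀ α : Fin k → ℝ,
      ∑ᶠ v ∈ V, ∏ i, fexp k p X (c+1) (v i) α = ∑ x ∈ A, echar (powerSums k x) α := by
  have hfin : V.Finite := by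
    have h : (Set.univ.pi fun _ : Fin r => Set.Icc (1:ℤ) ((p:ℤ) ^ (c+1))).Finite :=
      Set.Finite.pi fun _ => Set.finite_Icc _ _
    exact h.subset fun v hv i _ => (hV v hv i).1
  refine ⟨hfin.toFinset.biUnion fun v =>
    Fintype.piFinset fun i => progression X ((p:ℤ) ^ (c+1)) (v i), ?_, fun α => ?_⟩
  · intro x hx
    simp only [Finset.mem_biUnion, Set.Finite.mem_toFinset, Fintype.mem_piFinset,
      mem_progression] at hx ⊢
    obtain ⟨v, hv, hx⟩ := hx
    exact fun i => ⟨(hx i).1, ((hx i).2.of_dvd (pow_dvd_pow _ c.le_succ)).trans (hV v hv i).2⟩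
  · rw [finsum_mem_eq_finite_toFinset_sum _ hfin, Finset.sum_biUnion]
    · refine Finset.sum_congr rfl fun v _ => ?_
      simp only [fexp_eq_sum_echar]
      rw [Finset.prod_univ_sum]
      refine Finset.sum_congr rfl fun x _ => ?_
      rw [← echar_sum]
      congr 1
      funext j
      simp [powerSums]
    · intro v hv w hw hvw
      refine Finset.disjoint_left.2 fun x hxv hxw => hvw (funext fun i => ?_)
      simp only [Fintype.mem_piFinset, mem_progression] at hxv hxw
      have hv' := (hV v (by simpa using hv) i).1
      have hw' := (hV w (by simpa using hw) i).1
      have hdvd := ((hxv i).2.symm.trans (hxw i).2).dvd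
      have := Int.eq_zero_of_abs_lt_dvd hdvd (by rw [abs_lt]; constructor <;> linarith)
      linarith

/-- The mean value of a power of an exponential sum over tuples from a residue class modulo `q`
is at most the number of solutions of the Vinogradov system in a box of side about `X / q`. -/
lemma integral_box_le_Jcount {k r n : ℕ} {X Y : ℝ} {q ξ : ℤ} (hq : 0 < q) (hξ : ξ ≤ q)
    (hY : X / q + 1 - ξ / q ≤ Y) {A : Finset (Fin r → ℤ)}
    (hA : A ⊆ Fintype.piFinset fun _ : Fin r => progression X q ξ) :
    ∫ α in box k, ‖∑ x ∈ A, echar (powerSums k x) α‖ ^ (2 * n) ≤ (Jcount (r * n) k Y : ℝ) := by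
  have hpow : ∀ α : Fin k → ℝ, ‖∑ x ∈ A, echar (powerSums k x) α‖ ^ (2 * n) =
      ‖∑ y ∈ Fintype.piFinset fun _ : Fin n => A,
        echar (powerSums k fun i : Fin r × Fin n => y i.2 i.1) α‖ ^ 2 := fun α => by
    rw [mul_comm, pow_mul, ← norm_pow, Finset.sum_pow']
    congr 2
    refine Finset.sum_congr rfl fun y _ => ?_
    rw [← echar_sum]
    congr 1
    funext j
    simp [powerSums, Fintype.sum_prod_type_right]
  simp only [hpow]
  rw [integral_box_norm_sq, Nat.cast_le, Jcount, ← Set.ncard_coe_finset]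
  let g : ℤ → ℤ := fun x => (x - (ξ - q)) / q
  have hg : ∀ x ∈ progression X q ξ, q * g x + (ξ - q) = x := fun x hx => by
    have : q ∣ x - (ξ - q) := by
      have := (mem_progression.1 hx).2.symm.dvd
      rw [sub_sub_eq_add_sub, add_sub_right_comm]
      exact this.add dvd_rfl
    simp only [g, Int.mul_ediv_cancel' this]
    ring
  have hbound : ∀ x ∈ progression X q ξ, 1 ≤ g x ∧ (g x : ℝ) ≤ Y := fun x hx => by
    have hx' := mem_progression.1 hx
    have hgx := hg x hx
    constructor
    · by_contra hlt
      nlinarith [hx'.1.1]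
    · refine le_trans ?_ hY
      have hq' : (0:ℝ) < q := by exact_mod_cast hq
      have hgx' : (q:ℝ) * g x + (ξ - q) = x := by exact_mod_cast hgx
      rw [div_add_one hq'.ne', ← sub_div, le_div_iff₀ hq']
      linarith [hx'.1.2]
  let e : Fin r × Fin n ≃ Fin (r * n) := finProdFinEquiv
  let G : (Fin n → Fin r → ℤ) → Fin (r * n) → ℤ := fun y l => g (y (e.symm l).2 (e.symm l).1)
  have hmem : ∀ y ∈ Fintype.piFinset fun _ : Fin n => A, ∀ i j, y i j ∈ progression X q ξ :=
    fun y hy i j => Fintype.mem_piFinset.1 (hA (Fintype.mem_piFinset.1 hy i)) j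
  refine Set.ncard_le_ncard_of_injOn (fun z => (G z.1, G z.2)) ?_ ?_ (finite_Jcount_set _ _ _)
  · intro z hz
    simp only [Finset.coe_filter, Set.mem_ofPred_eq, Finset.mem_product] at hz
    obtain ⟨⟨h1, h2⟩, hz⟩ := hz
    refine ⟨fun l => hbound _ (hmem _ h1 _ _), fun l => hbound _ (hmem _ h2 _ _), fun j hj => ?_⟩
    have key : powerSums k (fun i : Fin r × Fin n => g (z.1 i.2 i.1)) =
        powerSums k (fun i : Fin r × Fin n => g (z.2 i.2 i.1)) := by
      apply powerSums_eq_of_affine hq.ne' (c := ξ - q)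
      simpa only [hg _ (hmem _ h1 _ _), hg _ (hmem _ h2 _ _)] using hz
    have := powerSums_eq_iff.1 key j (Finset.mem_Icc.1 hj).2
    rw [← this]
    exact Equiv.sum_comp e.symm fun i => g (z.1 i.2 i.1) ^ j - g (z.2 i.2 i.1) ^ j
  · intro z hz w hw hzw
    simp only [Finset.coe_filter, Set.mem_ofPred_eq, Finset.mem_product] at hz hw
    simp only [Prod.mk.injEq] at hzw
    have hG : ∀ y ∈ Fintype.piFinset (fun _ : Fin n => A),
        ∀ y' ∈ Fintype.piFinset (fun _ : Fin n => A), G y = G y' → y = y' := by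
      intro y hy y' hy' h
      funext i j
      have := congrFun h (e (j, i))
      simp only [G, Equiv.symm_apply_apply] at this
      rw [← hg _ (hmem y hy i j), this, hg _ (hmem y' hy' i j)]
    exact Prod.ext (hG _ hz.1.1 _ hw.1.1 hzw.1) (hG _ hz.1.2 _ hw.1.2 hzw.2)

/-- Hölder's inequality on the unit box with exponents `t + 1` and `(t + 1) / t`. -/
lemma integral_box_mul_le {k t : ℕ} (ht : 0 < t) {f g : (Fin k → ℝ) → ℂ} (hf : Continuous f)
    (hg : Continuous g) :
    ∫ α in box k, ‖f α‖ ^ 2 * ‖g α‖ ^ (2 * t) ≤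
      (∫ α in box k, ‖f α‖ ^ (2 * (t+1))) ^ (1 / ((t:ℝ) + 1)) *
        (∫ α in box k, ‖g α‖ ^ (2 * (t+1))) ^ ((t:ℝ) / (t + 1)) := by
  have ht' : (0:ℝ) < t := by exact_mod_cast ht
  have hpq : ((t:ℝ) + 1).HolderConjugate (((t:ℝ) + 1) / t) := by
    rw [Real.holderConjugate_iff]
    constructor
    · linarith
    · field_simp
      ring
  have hbox : MeasurableSet (box k) := MeasurableSet.univ_pi fun _ => measurableSet_Ico
  have hK : IsCompact (Set.univ.pi fun _ : Fin k => Set.Icc (0:ℝ) 1) :=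
    isCompact_univ_pi fun _ => isCompact_Icc
  have hsub : _root_.box k ⊆ Set.univ.pi fun _ : Fin k => Set.Icc (0:ℝ) 1 :=
    Set.pi_mono fun _ _ => Set.Ico_subset_Icc_self
  have hfin : IsFiniteMeasure (volume.restrict (box k)) :=
    ⟨by simpa using (measure_mono hsub).trans_lt hK.measure_lt_top⟩
  have hLp : ∀ h : (Fin k → ℝ) → ℝ, Continuous h → ∀ P : ENNReal,
      MemLp h P (volume.restrict (box k)) := fun h hh P => by
    obtain ⟨C, hC⟩ := hK.exists_bound_of_continuousOn hh.continuousOn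
    exact MemLp.of_bound hh.aestronglyMeasurable C
      ((ae_restrict_iff' hbox).2 (Eventually.of_forall fun x hx => hC x (hsub hx)))
  have H := integral_mul_le_Lp_mul_Lq_of_nonneg (μ := volume.restrict (box k)) hpq
    (f := fun α => ‖f α‖ ^ 2) (g := fun α => ‖g α‖ ^ (2 * t))
    (Eventually.of_forall fun _ => by positivity) (Eventually.of_forall fun _ => by positivity)
    (hLp _ (by fun_prop) _) (hLp _ (by fun_prop) _)
  have h1 : ∀ α, (‖f α‖ ^ 2 : ℝ) ^ ((t:ℝ) + 1) = ‖f α‖ ^ (2 * (t+1)) := fun α => by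
    rw [pow_mul, ← Real.rpow_natCast (‖f α‖ ^ 2) (t + 1)]
    push_cast
    rfl
  have h2 : ∀ α, (‖g α‖ ^ (2 * t) : ℝ) ^ (((t:ℝ) + 1) / t) = ‖g α‖ ^ (2 * (t+1)) := fun α => by
    rw [← Real.rpow_natCast, ← Real.rpow_natCast, ← Real.rpow_mul (norm_nonneg _)]
    congr 1
    push_cast
    field_simp
  simp only [h1, h2, one_div_div] at H
  exact H

lemma kappa_le {k r t : ℕ} (ht : 2 ≤ t) (hr : 1 ≤ r) (hrt : k ≤ r + t) :
    kappa k r t ≤ (r:ℝ) * ((t:ℝ) + 1) := by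
  have ht' : (2:ℝ) ≤ t := by exact_mod_cast ht
  have hr' : (1:ℝ) ≤ r := by exact_mod_cast hr
  have hfrac : 0 ≤ (2 * (r:ℝ) - 2) / ((t:ℝ) - 1) := div_nonneg (by linarith) (by linarith)
  obtain ⟨d, hd⟩ := Nat.exists_eq_add_of_le hrt
  have hd' : (t:ℝ) + r - k = d := by
    have : (r:ℝ) + t = k + d := by exact_mod_cast hd
    linarith
  rw [kappa, hd']
  rcases Nat.eq_zero_or_pos d with rfl | hpos
  · simp
  · have : (1:ℝ) ≤ d := by exact_mod_cast hpos
    have : 0 ≤ 1 / 2 * (d:ℝ) * (d - 1 + (2 * (r:ℝ) - 2) / ((t:ℝ) - 1)) :=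
      mul_nonneg (by linarith) (by linarith)
    linarith

/-- If each of two exponential sums is an exponential sum over tuples from a residue class, the
mixed mean value is controlled by the number of solutions of two Vinogradov systems. -/
lemma integral_box_mixed_le {k r t : ℕ} (ht : 0 < t) {X Y Z : ℝ} {q₁ q₂ ξ η : ℤ}
    (hq₁ : 0 < q₁) (hq₂ : 0 < q₂) (hξ : 1 ≤ ξ ∧ ξ ≤ q₁) (hη : 1 ≤ η ∧ η ≤ q₂)
    (hY : X / q₁ + 1 ≤ Y) (hZ : X / q₂ + 1 ≤ Z) {f g : (Fin k → ℝ) → ℂ}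
    (hf : ∃ A ⊆ Fintype.piFinset fun _ : Fin r => progression X q₁ ξ,
      ∀ α, f α = ∑ x ∈ A, echar (powerSums k x) α)
    (hg : ∃ A ⊆ Fintype.piFinset fun _ : Fin r => progression X q₂ η,
      ∀ α, g α = ∑ x ∈ A, echar (powerSums k x) α) :
    ∫ α in box k, ‖f α‖ ^ 2 * ‖g α‖ ^ (2 * t) ≤
      (Jcount (r * (t+1)) k Y : ℝ) ^ (1 / ((t:ℝ) + 1)) *
        (Jcount (r * (t+1)) k Z : ℝ) ^ ((t:ℝ) / (t + 1)) := by
  obtain ⟨A, hA, hf⟩ := hf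
  obtain ⟨B, hB, hg⟩ := hg
  have hcont : ∀ D : Finset (Fin r → ℤ),
      Continuous fun α : Fin k → ℝ => ∑ x ∈ D, echar (powerSums k x) α := fun D =>
    continuous_finsetSum _ fun x _ => continuous_echar _
  simp only [hf, hg]
  have hξ' : (0:ℝ) ≤ ξ / q₁ := div_nonneg (by exact_mod_cast (by omega : 0 ≤ ξ))
    (by exact_mod_cast hq₁.le)
  have hη' : (0:ℝ) ≤ η / q₂ := div_nonneg (by exact_mod_cast (by omega : 0 ≤ η))
    (by exact_mod_cast hq₂.le)
  refine (integral_box_mul_le ht (hcont A) (hcont B)).trans ?_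
  gcongr
  · exact integral_box_le_Jcount hq₁ hξ.2 (by linarith) hA
  · exact integral_box_le_Jcount hq₂ hη.2 (by linarith) hB

/-- The mean value `K_{a,b}(X)` is at most the corresponding mixture of two counts of solutions of
the Vinogradov system. -/
lemma Kmax_le {k p r t : ℕ} (hp : 0 < p) (ht : 0 < t) {X Y Z : ℝ} {a b : ℕ}
    (hY : X / (p:ℝ) ^ a + 1 ≤ Y) (hZ : X / (p:ℝ) ^ b + 1 ≤ Z) :
    Kmax k p r t X a b ≤ (Jcount (r * (t+1)) k Y : ℝ) ^ (1 / ((t:ℝ) + 1)) *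
        (Jcount (r * (t+1)) k Z : ℝ) ^ ((t:ℝ) / (t + 1)) := by
  have hpos : ∀ c, (0:ℤ) < (p:ℤ) ^ c := fun c => by positivity
  have hF : ∀ c ξ, ∃ A ⊆ Fintype.piFinset fun _ : Fin r => progression X ((p:ℤ) ^ c) ξ,
      ∀ α : Fin k → ℝ, Fexp k p r X c ξ α = ∑ x ∈ A, echar (powerSums k x) α := fun c ξ =>
    exists_finsum_prod_fexp_eq k p r X c ξ _ fun v hv i => ⟨hv.1 i, hv.2.1 i⟩
  rw [Kmax]
  split_ifs with ha
  · subst ha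
    refine Real.sSup_le ?_ (by positivity)
    rintro _ ⟨η, hη1, hη2, rfl⟩
    refine integral_box_mixed_le ht (hpos 0) (hpos b) (ξ := 1) (by simp) ⟨hη1, hη2⟩
      (by exact_mod_cast hY) (by exact_mod_cast hZ) ?_ (hF b η)
    exact exists_finsum_prod_fexp_eq k p r X 0 1 _ fun v hv i =>
      ⟨hv.1.1 i, by simp [Int.modEq_one]⟩
  · refine Real.sSup_le ?_ (by positivity)
    rintro _ ⟨ξ, η, hξ1, hξ2, hη1, hη2, -, rfl⟩
    exact integral_box_mixed_le ht (hpos a) (hpos b) ⟨hξ1, hξ2⟩ ⟨hη1, hη2⟩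
      (by exact_mod_cast hY) (by exact_mod_cast hZ) (hF a ξ) (hF b η)

/-- Lemma 5.3: for 0 ≤ a < b ≤ (2θ)⁻¹ and Λ ≥ 0 one has
⟦K_{a,b}(X)⟧ ≤ C X^{Λ+δ} (M^{b-a})^s. -/
theorem lemma5_3 (k r t : ℕ) (hk : 2 ≤ k)
    (ht1 : max 2 (((k : ℝ) - 1) / 2) ≤ (t : ℝ)) (ht2 : t ≤ k)
    (hr1 : 1 ≤ r) (hr2 : r ≤ k) (hrt : k ≤ r + t) :
    ∃ N₀ : ℕ, ∀ N : ℕ, N₀ ≤ N →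
    ∃ C : ℝ, 0 < C ∧ ∃ X₀ : ℝ, ∀ X : ℝ, X₀ ≤ X →
    (∀ Y : ℝ, X ^ ((1:ℝ)/2) ≤ Y →
        (Jcount (r*(t+1)) k Y : ℝ) < Y ^ (lamExp k (r*(t+1)) + deltaC t N)) →
    ∀ p : ℕ, p.Prime → Mval t N X < (p:ℝ) → (p:ℝ) ≤ 2 * Mval t N X →
    0 ≤ LamC k r t →
    ∀ a b : ℕ, a < b → (b:ℝ) ≤ (2 * thetaC t N)⁻¹ →
      normK k p r t N X a b ≤
        C * X ^ (LamC k r t + deltaC t N) * (Mval t N X ^ (b-a)) ^ (r*t) := by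
  have ht : 2 ≤ t := by exact_mod_cast (le_max_left _ _).trans ht1
  refine ⟨0, fun N _ => ⟨2 ^ (lamExp k (r*(t+1)) + deltaC t N), by positivity, 1,
    fun X hX hJ p hp hMp _ hΛ a b hab hb => ?_⟩⟩
  have hX0 : 0 < X := by linarith
  have hθ : 0 < thetaC t N := by unfold thetaC; positivity
  have hδ : 0 ≤ deltaC t N := by unfold deltaC; positivity
  have hM : 1 ≤ Mval t N X := Real.one_le_rpow hX hθ.le
  have hM0 : 0 < Mval t N X := by linarith
  have hMb : Mval t N X ^ b ≤ X ^ ((1:ℝ)/2) := by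
    rw [Mval, ← Real.rpow_mul_natCast hX0.le]
    refine Real.rpow_le_rpow_of_exponent_le hX ?_
    calc thetaC t N * b ≤ thetaC t N * (2 * thetaC t N)⁻¹ := by gcongr
      _ = 1 / 2 := by field_simp
  have hhalf : 1 ≤ X ^ ((1:ℝ)/2) := Real.one_le_rpow hX (by norm_num)
  have hsq : X ^ ((1:ℝ)/2) * X ^ ((1:ℝ)/2) = X := by
    rw [← Real.rpow_add hX0]
    norm_num
  have hquot : ∀ c ≤ b, X ^ ((1:ℝ)/2) ≤ X / Mval t N X ^ c := fun c hc => by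
    rw [le_div_iff₀ (by positivity)]
    have hMc : Mval t N X ^ c ≤ X ^ ((1:ℝ)/2) := (pow_le_pow_right₀ hM hc).trans hMb
    calc X ^ ((1:ℝ)/2) * Mval t N X ^ c ≤ X ^ ((1:ℝ)/2) * X ^ ((1:ℝ)/2) := by gcongr
      _ = X := hsq
  have hside : ∀ c ≤ b, X / (p:ℝ) ^ c + 1 ≤ 2 * (X / Mval t N X ^ c) := fun c hc => by
    have : X / (p:ℝ) ^ c ≤ X / Mval t N X ^ c := by gcongr
    linarith [hquot c hc]
  have hcount : ∀ c ≤ b, (Jcount (r*(t+1)) k (2 * (X / Mval t N X ^ c)) : ℝ) ≤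
      (2 * (X / Mval t N X ^ c)) ^ (lamExp k (r*(t+1)) + deltaC t N) := fun c hc =>
    (hJ _ (by linarith [hquot c hc])).le
  have hK : Kmax k p r t X a b ≤ _ :=
    Kmax_le (k := k) (r := r) hp.pos (by omega : 0 < t) (hside a hab.le) (hside b le_rfl)
  have hA0 : 0 < X / Mval t N X ^ a := by positivity
  have hB0 : 0 < X / Mval t N X ^ b := by positivity
  have hK' : Kmax k p r t X a b ≤
      ((2 * (X / Mval t N X ^ a)) ^ (lamExp k (r*(t+1)) + deltaC t N)) ^ (1 / ((t:ℝ) + 1)) *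
      ((2 * (X / Mval t N X ^ b)) ^ (lamExp k (r*(t+1)) + deltaC t N)) ^ ((t:ℝ) / (t + 1)) := by
    refine hK.trans ?_
    gcongr
    · exact hcount a hab.le
    · exact hcount b le_rfl
  have hκ := kappa_le ht hr1 hrt
  rw [normK]
  refine (mul_le_mul_of_nonneg_right (mul_le_mul_of_nonneg_right hK' (by positivity))
    (by positivity)).trans ?_
  obtain ⟨d, rfl⟩ := Nat.exists_eq_add_of_le hab.le
  have hlogM : 0 ≤ Real.log (Mval t N X) := Real.log_nonneg hM
  have hlogA : Real.log (X / Mval t N X ^ a) = Real.log X - a * Real.log (Mval t N X) := by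
    rw [Real.log_div hX0.ne' (by positivity), Real.log_pow]
  have hlogB : Real.log (X / Mval t N X ^ (a + d)) =
      Real.log X - (a + d) * Real.log (Mval t N X) := by
    rw [Real.log_div hX0.ne' (by positivity), Real.log_pow]
    push_cast
    ring
  have hlogM' : Real.log (Mval t N X ^ (a + d - a)) = d * Real.log (Mval t N X) := by
    rw [Nat.add_sub_cancel_left, Real.log_pow]
  rw [← Real.log_le_log_iff (by positivity) (by positivity)]
  have e1 : ∀ {x : ℝ}, 0 < x → ∀ y : ℝ, Real.log (x ^ y) = y * Real.log x :=
    fun hx y => Real.log_rpow hx y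
  rw [Real.log_mul (by positivity) (by positivity), Real.log_mul (by positivity) (by positivity),
    Real.log_mul (by positivity) (by positivity), Real.log_mul (by positivity) (by positivity),
    Real.log_mul (by positivity) (by positivity), e1 (by positivity), e1 (by positivity),
    e1 (by positivity), e1 (by positivity), e1 (by positivity), e1 (by positivity),
    e1 (by positivity), e1 (by positivity), Real.log_mul (by norm_num) hA0.ne',
    Real.log_mul (by norm_num) hB0.ne', Real.log_pow, hlogM', hlogA, hlogB]
  have hlam : lamExp k (r*(t+1)) + deltaC t N =
      LamC k r t + deltaC t N + 2 * (r * (t + 1)) - kappa k r t := by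
    rw [LamC]
    push_cast
    ring
  rw [hlam]
  generalize LamC k r t = Λ at *
  generalize deltaC t N = δ at *
  generalize kappa k r t = κ at *
  generalize Real.log (Mval t N X) = m at *
  generalize Real.log X = x at *
  have htpos : (0:ℝ) < t + 1 := by positivity
  have hgap : 0 ≤ (Λ + δ) * ((a + d * (t / (t + 1))) * m) := by positivity
  have hκgap : 0 ≤ (r * ((t:ℝ) + 1) - κ) * (t / (t + 1) * (d * m)) :=
    mul_nonneg (by linarith) (by positivity)
  rw [← sub_nonneg]
  refine (add_nonneg hgap hκgap).trans_eq ?_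
  push_cast
  field_simp
  ring

end
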